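/- Let F = (R, Σ) be a subset-free congestion game form. Then F has no bad configuration (i.e., F is tree representable) if and only if every single-signed monotone symmetric congestion game G with form F satisfies Z(G) = NE(G). -/

import Mathlib

/-!
Write `S_A` for the set of strategies containing `A`. Absence of a bad configuration says that the
sets `S_A` form a laminar family; equivalently, for strategies `a`, `b`, `t` with a common resource
of `a` and `b` outside `t`, one has `a ∩ t = b ∩ t` (`inter_eq_of_tree`).

*Tree representable implies `Z = NE`.* Fix two players with strategies `a`, `b` and let the others
stay put. Let `F x` be the value of `x` against these others, and `D y` the loss on the resources of
`y` caused by one additional user. Then `x` has value `F x - D (x ∩ b)` in the presence of `b`. With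
this bookkeeping, laminarity gives two facts: appending a best response to an equilibrium yields an
equilibrium (`neOn_insert`), and deleting from an equilibrium a player of least utility leaves an
equilibrium (`exists_neOn_erase`). The first turns a greedy order into an equilibrium by adding
players one at a time; the second produces a greedy order from an equilibrium by repeatedly removing
the last player. The sign of the payoffs plays no role here.

*A bad configuration separates `Z` from `NE`.* In a two-player game with positive payoffs, let the
first user of `A` and of `B` earn a very large amount, and choose the remaining payoffs so that `s2`
and `s3` are best responses to each other (each resource of one's own strategy is worth more than
all the others together). Then `(s2, s3)` is an equilibrium, but whoever moves first prefers `s1`,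
which collects both large payoffs (`exists_game_of_badConfig`).
-/

open Finset

/-- Congestion of resource `r` under strategy profile `s` (players `ι`). -/
def cgCong {ρ ι : Type} [DecidableEq ρ] [Fintype ι] (s : ι → Finset ρ) (r : ρ) : ℕ :=
  (Finset.univ.filter (fun i => r ∈ s i)).card

/-- Utility of player `i`: the sum of `P r (c(s)_r)` over the resources she uses. -/
def cgUtil {ρ ι : Type} [DecidableEq ρ] [Fintype ι] (P : ρ → ℕ → ℝ)
    (s : ι → Finset ρ) (i : ι) : ℝ :=
  ∑ r ∈ s i, P r (cgCong s r)

/-- A strategy profile: every player selects a strategy from the strategy set `SS`. -/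
def IsProfile {ρ ι : Type} (SS : Finset (Finset ρ)) (s : ι → Finset ρ) : Prop :=
  ∀ i, s i ∈ SS

/-- Pure Nash equilibrium. -/
def IsNE {ρ ι : Type} [DecidableEq ρ] [DecidableEq ι] [Fintype ι]
    (SS : Finset (Finset ρ)) (P : ρ → ℕ → ℝ) (s : ι → Finset ρ) : Prop :=
  IsProfile SS s ∧
    ∀ i : ι, ∀ t ∈ SS, cgUtil P s i ≥ cgUtil P (Function.update s i t) i

/-- The congestion seen by player `i` on resource `r` from players preceding her
in the order `π`. -/
def greedyCong {ρ ι : Type} [DecidableEq ρ] [Fintype ι] (s : ι → Finset ρ)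
    (π : ι → ℕ) (i : ι) (r : ρ) : ℕ :=
  (Finset.univ.filter (fun j => r ∈ s j ∧ π j < π i)).card

/-- Greedy profile: for some linear order (injective ranking `π`) of the players,
each player's strategy is a best response to the choices of her predecessors. -/
def IsGreedy {ρ ι : Type} [DecidableEq ρ] [Fintype ι]
    (SS : Finset (Finset ρ)) (P : ρ → ℕ → ℝ) (s : ι → Finset ρ) : Prop :=
  IsProfile SS s ∧
    ∃ π : ι → ℕ, Function.Injective π ∧ ∀ i : ι, ∀ t ∈ SS,
      (∑ r ∈ s i, P r (greedyCong s π i r + 1)) ≥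
        ∑ r ∈ t, P r (greedyCong s π i r + 1)

/-- Monotone resource payoffs (for a game with `n` players):
`P_r(k) > P_r(l)` whenever `1 ≤ k < l ≤ n`. -/
def MonotonePay {ρ : Type} (n : ℕ) (P : ρ → ℕ → ℝ) : Prop :=
  ∀ r : ρ, ∀ k l : ℕ, 1 ≤ k → k < l → l ≤ n → P r k > P r l

/-- A congestion game form: nonempty strategy set consisting of nonempty resource sets. -/
def ValidForm {ρ : Type} (SS : Finset (Finset ρ)) : Prop :=
  SS.Nonempty ∧ ∀ s ∈ SS, s.Nonempty

/-- Subset-free strategy set. -/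
def SubsetFree {ρ : Type} (SS : Finset (Finset ρ)) : Prop :=
  ∀ s ∈ SS, ∀ t ∈ SS, s ≠ t → ¬ s ⊆ t

/-- A bad configuration (Holzman–Law Yone): a form is tree representable iff
it has no bad configuration. -/
def BadConfig {ρ : Type} (SS : Finset (Finset ρ)) : Prop :=
  ∃ A B : ρ, ∃ s1 ∈ SS, ∃ s2 ∈ SS, ∃ s3 ∈ SS,
    A ∈ s1 ∧ B ∈ s1 ∧ A ∈ s2 ∧ A ∉ s3 ∧ B ∈ s3 ∧ B ∉ s2

/-- Single-signed resource payoffs (for a game with `n` players): either all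
payoffs `P_r(k)`, `1 ≤ k ≤ n`, are positive or all are negative. -/
def SingleSigned {ρ : Type} (n : ℕ) (P : ρ → ℕ → ℝ) : Prop :=
  (∀ r : ρ, ∀ k : ℕ, 1 ≤ k → k ≤ n → 0 < P r k) ∨
    (∀ r : ρ, ∀ k : ℕ, 1 ≤ k → k ≤ n → P r k < 0)

section Aux

variable {ρ : Type} [DecidableEq ρ]

/-! ### Two players in a tree -/

theorem inter_eq_of_tree {SS : Finset (Finset ρ)} (h : ¬ BadConfig SS) {a b t : Finset ρ}
    (ha : a ∈ SS) (hb : b ∈ SS) (ht : t ∈ SS) (hab : ¬ a ∩ b ⊆ t) : a ∩ t = b ∩ t := by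
  obtain ⟨r, hr, hrt⟩ := Finset.not_subset.1 hab
  rw [Finset.mem_inter] at hr
  ext q
  simp only [Finset.mem_inter]
  constructor
  · rintro ⟨hqa, hqt⟩
    by_contra hq
    exact h ⟨r, q, a, ha, b, hb, t, ht, hr.1, hqa, hr.2, hrt, hqt, fun hqb => hq ⟨hqb, hqt⟩⟩
  · rintro ⟨hqb, hqt⟩
    by_contra hq
    exact h ⟨r, q, b, hb, a, ha, t, ht, hr.2, hqb, hr.1, hrt, hqt, fun hqa => hq ⟨hqa, hqt⟩⟩

/-- If `a` is a best response to the others and `b` a best response to the others and `a`, then `a`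
stays a best response once `b` is present. -/
theorem best_of_insert {SS : Finset (Finset ρ)} (h : ¬ BadConfig SS) {a b t : Finset ρ}
    (ha : a ∈ SS) (hb : b ∈ SS) (ht : t ∈ SS) (F D : Finset ρ → ℝ)
    (hD : ∀ x y, x ⊆ y → D x ≤ D y)
    (h1 : ∀ x ∈ SS, F x ≤ F a) (h2 : ∀ x ∈ SS, F x - D (x ∩ a) ≤ F b - D (b ∩ a)) :
    F t - D (t ∩ b) ≤ F a - D (a ∩ b) := by
  by_cases hab : a ∩ b ⊆ t
  · have := hD (a ∩ b) (t ∩ b) (Finset.subset_inter hab Finset.inter_subset_right)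
    linarith [h1 t ht]
  · have e := inter_eq_of_tree h ha hb ht hab
    have h3 := h2 t ht
    rw [Finset.inter_comm t a, e, Finset.inter_comm b t, Finset.inter_comm b a] at h3
    linarith [h1 b hb]

/-- If `a` and `b` are best responses in each other's presence and `b` earns no more than `a`, then
`a` stays a best response once `b` is removed. -/
theorem best_of_erase {SS : Finset (Finset ρ)} (h : ¬ BadConfig SS) {a b t : Finset ρ}
    (ha : a ∈ SS) (hb : b ∈ SS) (ht : t ∈ SS) (F D : Finset ρ → ℝ)
    (hD : ∀ x y, x ⊆ y → D x ≤ D y)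
    (h1 : ∀ x ∈ SS, F x - D (x ∩ b) ≤ F a - D (a ∩ b))
    (h2 : ∀ x ∈ SS, F x - D (x ∩ a) ≤ F b - D (b ∩ a))
    (h3 : F b - D (b ∩ a) ≤ F a - D (a ∩ b)) : F t ≤ F a := by
  by_cases hab : t ∩ b ⊆ a
  · have := hD (t ∩ b) (a ∩ b) (Finset.subset_inter hab Finset.inter_subset_right)
    linarith [h1 t ht]
  · have e := inter_eq_of_tree h ht hb ha hab
    have h4 := h2 t ht
    rw [e, Finset.inter_comm b a] at h4
    rw [Finset.inter_comm b a] at h3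
    linarith

/-! ### Equilibria among a subset of the players -/

variable {ι : Type} [DecidableEq ι]

/-- Congestion of `r` caused by the players in `T`. -/
def congOn (s : ι → Finset ρ) (T : Finset ι) (r : ρ) : ℕ :=
  (T.filter (fun j => r ∈ s j)).card

/-- Payoff of a player who uses `t` in addition to the choices of the players in `T`. -/
def valOn (P : ρ → ℕ → ℝ) (s : ι → Finset ρ) (T : Finset ι) (t : Finset ρ) : ℝ :=
  ∑ r ∈ t, P r (congOn s T r + 1)

/-- The restriction of `s` to the players in `T` is an equilibrium of the game among them. -/
def NEOn (SS : Finset (Finset ρ)) (P : ρ → ℕ → ℝ) (s : ι → Finset ρ) (T : Finset ι) : Prop :=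
  ∀ i ∈ T, ∀ t ∈ SS, valOn P s (T.erase i) t ≤ valOn P s (T.erase i) (s i)

/-- Total loss on the resources of `y`, each used by a player joining `T`, when each of them
receives one further user. -/
def lossOn (P : ρ → ℕ → ℝ) (s : ι → Finset ρ) (T : Finset ι) (y : Finset ρ) : ℝ :=
  ∑ r ∈ y, (P r (congOn s T r + 1) - P r (congOn s T r + 2))

theorem congOn_insert (s : ι → Finset ρ) {T : Finset ι} {i : ι} (hi : i ∉ T) (r : ρ) :
    congOn s (insert i T) r = congOn s T r + if r ∈ s i then 1 else 0 := by
  unfold congOn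
  rw [Finset.filter_insert]
  split_ifs with h
  · rw [Finset.card_insert_of_notMem (by simp [hi])]
  · simp

theorem valOn_insert (P : ρ → ℕ → ℝ) (s : ι → Finset ρ) {T : Finset ι} {i : ι} (hi : i ∉ T)
    (t : Finset ρ) :
    valOn P s (insert i T) t = valOn P s T t - lossOn P s T (t ∩ s i) := by
  unfold valOn lossOn
  rw [← Finset.sum_ite_mem, ← Finset.sum_sub_distrib]
  refine Finset.sum_congr rfl fun r _ => ?_
  rw [congOn_insert s hi]
  split_ifs
  · ring_nf
  · simp

theorem lossOn_mono [Fintype ι] {P : ρ → ℕ → ℝ} (hP : MonotonePay (Fintype.card ι) P)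
    (s : ι → Finset ρ) {T : Finset ι} (hT : T.card + 2 ≤ Fintype.card ι) (x y : Finset ρ)
    (hxy : x ⊆ y) : lossOn P s T x ≤ lossOn P s T y := by
  refine Finset.sum_le_sum_of_subset_of_nonneg hxy fun r _ _ => ?_
  have h1 : congOn s T r ≤ T.card := Finset.card_filter_le _ _
  have := hP r (congOn s T r + 1) (congOn s T r + 2) (by omega) (by omega) (by omega)
  linarith

theorem card_add_two_le [Fintype ι] {T : Finset ι} {i j : ι} (hij : i ≠ j) (hi : i ∉ T)
    (hj : j ∉ T) : T.card + 2 ≤ Fintype.card ι := by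
  have h : (insert i (insert j T)).card = T.card + 2 := by
    rw [Finset.card_insert_of_notMem (by simp [hij, hi]), Finset.card_insert_of_notMem hj]
  rw [← h]
  exact Finset.card_le_univ _

theorem neOn_insert [Fintype ι] {SS : Finset (Finset ρ)} (h : ¬ BadConfig SS)
    {P : ρ → ℕ → ℝ} (hP : MonotonePay (Fintype.card ι) P) {s : ι → Finset ρ}
    (hs : IsProfile SS s) {T : Finset ι} {i : ι} (hi : i ∉ T) (hT : NEOn SS P s T)
    (hbr : ∀ t ∈ SS, valOn P s T t ≤ valOn P s T (s i)) : NEOn SS P s (insert i T) := by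
  intro j hj t ht
  rcases Finset.mem_insert.1 hj with rfl | hjT
  · rw [Finset.erase_insert hi]
    exact hbr t ht
  have hij : i ≠ j := fun e => hi (e ▸ hjT)
  have hi' : i ∉ T.erase j := fun e => hi (Finset.mem_of_mem_erase e)
  have hj' : j ∉ T.erase j := Finset.notMem_erase j T
  rw [Finset.erase_insert_of_ne hij, valOn_insert P s hi', valOn_insert P s hi']
  refine best_of_insert h (hs j) (hs i) ht _ _
    (lossOn_mono hP s (card_add_two_le hij hi' hj')) (hT j hjT) fun x hx => ?_
  rw [← valOn_insert P s hj', ← valOn_insert P s hj', Finset.insert_erase hjT]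
  exact hbr x hx

theorem exists_neOn_erase [Fintype ι] {SS : Finset (Finset ρ)} (h : ¬ BadConfig SS)
    {P : ρ → ℕ → ℝ} (hP : MonotonePay (Fintype.card ι) P) {s : ι → Finset ρ}
    (hs : IsProfile SS s) {T : Finset ι} (hne : T.Nonempty) (hT : NEOn SS P s T) :
    ∃ i ∈ T, NEOn SS P s (T.erase i) := by
  obtain ⟨i, hiT, hmin⟩ := T.exists_min_image (fun i => valOn P s (T.erase i) (s i)) hne
  refine ⟨i, hiT, fun j hj t ht => ?_⟩
  have hjT := Finset.mem_of_mem_erase hj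
  have hji := Finset.ne_of_mem_erase hj
  have hj' : j ∉ (T.erase i).erase j := Finset.notMem_erase j _
  have hi' : i ∉ (T.erase i).erase j := by simp
  have e1 : T.erase i = insert j ((T.erase i).erase j) := (Finset.insert_erase hj).symm
  have e2 : T.erase j = insert i ((T.erase i).erase j) := by
    rw [Finset.erase_right_comm, Finset.insert_erase (Finset.mem_erase.2 ⟨hji.symm, hiT⟩)]
  have k1 : ∀ x, valOn P s (T.erase i) x = valOn P s ((T.erase i).erase j) x -
      lossOn P s ((T.erase i).erase j) (x ∩ s j) := fun x => by
    rw [← valOn_insert P s hj', ← e1]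
  have k2 : ∀ x, valOn P s (T.erase j) x = valOn P s ((T.erase i).erase j) x -
      lossOn P s ((T.erase i).erase j) (x ∩ s i) := fun x => by
    rw [← valOn_insert P s hi', ← e2]
  refine best_of_erase h (hs j) (hs i) ht _ (lossOn P s ((T.erase i).erase j))
    (lossOn_mono hP s (card_add_two_le hji hj' hi')) (fun x hx => ?_) (fun x hx => ?_) ?_
  · rw [← k2, ← k2]
    exact hT j hjT x hx
  · rw [← k1, ← k1]
    exact hT i hiT x hx
  · rw [← k1, ← k2]
    exact hmin j hjT

theorem isNE_iff_neOn [Fintype ι] (SS : Finset (Finset ρ)) (P : ρ → ℕ → ℝ) (s : ι → Finset ρ) :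
    IsNE SS P s ↔ IsProfile SS s ∧ NEOn SS P s Finset.univ := by
  have key : ∀ i t, cgUtil P (Function.update s i t) i = valOn P s (Finset.univ.erase i) t := by
    intro i t
    unfold cgUtil valOn
    rw [Function.update_self]
    refine Finset.sum_congr rfl fun r hr => ?_
    congr 1
    unfold cgCong congOn
    have : Finset.univ.filter (fun j => r ∈ Function.update s i t j) =
        insert i ((Finset.univ.erase i).filter fun j => r ∈ s j) := by
      ext j
      by_cases hj : j = i
      · subst hj
        simp [hr]
      · simp [hj]
    rw [this, Finset.card_insert_of_notMem (by simp)]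
  have key' : ∀ i, cgUtil P s i = valOn P s (Finset.univ.erase i) (s i) := fun i => by
    rw [← key, Function.update_eq_self]
  simp only [IsNE, NEOn, key, key', ge_iff_le, Finset.mem_univ, forall_true_left]

/-! ### Greedy profiles and equilibria -/

theorem neOn_of_greedy [Fintype ι] {SS : Finset (Finset ρ)} (h : ¬ BadConfig SS)
    {P : ρ → ℕ → ℝ} (hP : MonotonePay (Fintype.card ι) P) {s : ι → Finset ρ}
    (hs : IsProfile SS s) {π : ι → ℕ} (hπ : Function.Injective π)
    (hg : ∀ i, ∀ t ∈ SS, valOn P s (Finset.univ.filter fun j => π j < π i) t ≤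
      valOn P s (Finset.univ.filter fun j => π j < π i) (s i)) :
    NEOn SS P s Finset.univ := by
  have key : ∀ m : ℕ, NEOn SS P s (Finset.univ.filter fun j => π j < m) := by
    intro m
    induction m with
    | zero => intro i hi; simp at hi
    | succ m ih =>
      by_cases hm : ∃ i, π i = m
      · obtain ⟨i, rfl⟩ := hm
        have e : (Finset.univ.filter fun j => π j < π i + 1) =
            insert i (Finset.univ.filter fun j => π j < π i) := by
          ext j
          simp only [Finset.mem_filter, Finset.mem_univ, true_and, Finset.mem_insert,
            Nat.lt_succ_iff_lt_or_eq, hπ.eq_iff]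
          tauto
        rw [e]
        exact neOn_insert h hP hs (by simp) ih (hg i)
      · have e : (Finset.univ.filter fun j => π j < m + 1) =
            Finset.univ.filter fun j => π j < m := by
          ext j
          have : π j ≠ m := fun e => hm ⟨j, e⟩
          simp only [Finset.mem_filter, Finset.mem_univ, true_and]
          omega
        rwa [e]
  have e : (Finset.univ.filter fun j => π j < Finset.univ.sup π + 1) = Finset.univ := by
    ext j
    simpa [Nat.lt_succ_iff] using Finset.le_sup (f := π) (Finset.mem_univ j)
  rw [← e]
  exact key _

theorem exists_order_of_neOn [Fintype ι] {SS : Finset (Finset ρ)} (h : ¬ BadConfig SS)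
    {P : ρ → ℕ → ℝ} (hP : MonotonePay (Fintype.card ι) P) {s : ι → Finset ρ}
    (hs : IsProfile SS s) (m : ℕ) : ∀ T : Finset ι, T.card = m → NEOn SS P s T →
    ∃ π : ι → ℕ, Set.InjOn π T ∧ ∀ i ∈ T, ∀ t ∈ SS,
      valOn P s (T.filter fun j => π j < π i) t ≤
        valOn P s (T.filter fun j => π j < π i) (s i) := by
  induction m with
  | zero =>
    intro T hT _
    rw [Finset.card_eq_zero] at hT
    subst hT
    exact ⟨fun _ => 0, by simp, by simp⟩
  | succ m ih =>
    intro T hT hNE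
    obtain ⟨i, hiT, hi⟩ := exists_neOn_erase h hP hs (Finset.card_pos.1 (by omega)) hNE
    obtain ⟨π, hinj, hπ⟩ := ih (T.erase i) (by rw [Finset.card_erase_of_mem hiT, hT]; rfl) hi
    have hlt : ∀ j ∈ T, π j < T.sup π + 1 := fun j hj => Nat.lt_succ_of_le (Finset.le_sup hj)
    -- `i` is placed after every other player of `T`.
    refine ⟨Function.update π i (T.sup π + 1), ?_, ?_⟩
    · intro j hj k hk hjk
      by_cases hji : j = i <;> by_cases hki : k = i
      · rw [hji, hki]
      · subst hji
        rw [Function.update_self, Function.update_of_ne hki] at hjk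
        exact absurd hjk (hlt k hk).ne'
      · subst hki
        rw [Function.update_self, Function.update_of_ne hji] at hjk
        exact absurd hjk (hlt j hj).ne
      · rw [Function.update_of_ne hki, Function.update_of_ne hji] at hjk
        exact hinj (by simpa [hji] using hj) (by simpa [hki] using hk) hjk
    · intro k hk t ht
      by_cases hki : k = i
      · subst hki
        have e : (T.filter fun j => Function.update π k (T.sup π + 1) j <
            Function.update π k (T.sup π + 1) k) = T.erase k := by
          ext j
          by_cases hj : j = k
          · subst hj
            simp only [Finset.mem_filter, lt_self_iff_false, and_false, Finset.mem_erase, ne_eq,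
              not_true_eq_false, false_and]
          · simp only [Finset.mem_filter, Function.update_self, Function.update_of_ne hj,
              Finset.mem_erase]
            exact ⟨fun q => ⟨hj, q.1⟩, fun q => ⟨q.2, hlt j q.2⟩⟩
        rw [e]
        exact hNE k hk t ht
      · have e : (T.filter fun j => Function.update π i (T.sup π + 1) j <
            Function.update π i (T.sup π + 1) k) =
            (T.erase i).filter fun j => π j < π k := by
          ext j
          by_cases hj : j = i
          · subst hj
            have := hlt k hk
            simp only [Finset.mem_filter, Function.update_self, Function.update_of_ne hki,
              Finset.mem_erase]
            constructor
            · rintro ⟨_, q⟩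
              omega
            · rintro ⟨⟨q, _⟩, _⟩
              exact absurd rfl q
          · simp [hj, Function.update_of_ne hki]
        rw [e]
        exact hπ k (Finset.mem_erase.2 ⟨hki, hk⟩) t ht

theorem isGreedy_iff [Fintype ι] (SS : Finset (Finset ρ)) (P : ρ → ℕ → ℝ) (s : ι → Finset ρ) :
    IsGreedy SS P s ↔ IsProfile SS s ∧ ∃ π : ι → ℕ, Function.Injective π ∧ ∀ i, ∀ t ∈ SS,
      valOn P s (Finset.univ.filter fun j => π j < π i) t ≤
        valOn P s (Finset.univ.filter fun j => π j < π i) (s i) := by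
  have key : ∀ (π : ι → ℕ) i r,
      greedyCong s π i r = congOn s (Finset.univ.filter fun j => π j < π i) r := by
    intro π i r
    unfold greedyCong congOn
    rw [Finset.filter_filter]
    congr 1
    ext j
    simp [and_comm]
  simp only [IsGreedy, key, ge_iff_le]
  rfl

theorem isGreedy_iff_isNE_of_tree [Fintype ι] {SS : Finset (Finset ρ)} (h : ¬ BadConfig SS)
    {P : ρ → ℕ → ℝ} (hP : MonotonePay (Fintype.card ι) P) (s : ι → Finset ρ) :
    IsGreedy SS P s ↔ IsNE SS P s := by
  rw [isGreedy_iff, isNE_iff_neOn]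
  constructor
  · rintro ⟨hs, π, hπ, hg⟩
    exact ⟨hs, neOn_of_greedy h hP hs hπ hg⟩
  · rintro ⟨hs, hNE⟩
    obtain ⟨π, hinj, hπ⟩ := exists_order_of_neOn h hP hs _ Finset.univ rfl hNE
    refine ⟨hs, π, fun i j e => hinj (by simp) (by simp) e, fun i t ht => ?_⟩
    exact hπ i (Finset.mem_univ i) t ht

/-! ### The game built from a bad configuration -/

/-- With `N` the number of resources and `E = 2 * N + 2`, a strategy in a subset-free form is optimal
once each of its resources is worth at least `E`,
while all other resources are worth at most `2`, with `E` exceeding their possible total. -/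
theorem sum_le_of_dominant [Fintype ρ] {SS : Finset (Finset ρ)} (hsf : SubsetFree SS)
    {a t : Finset ρ} (ha : a ∈ SS) (ht : t ∈ SS) (f : ρ → ℝ)
    (h1 : ∀ r ∈ a, 2 * (Fintype.card ρ : ℝ) + 2 ≤ f r) (h2 : ∀ r ∉ a, f r ≤ 2) :
    ∑ r ∈ t, f r ≤ ∑ r ∈ a, f r := by
  by_cases hat : a = t
  · rw [hat]
  obtain ⟨q, hqa, hqt⟩ := Finset.not_subset.1 (hsf a ha t ht hat)
  have hN : (0 : ℝ) ≤ Fintype.card ρ := Nat.cast_nonneg _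
  have u1 : ∑ r ∈ t \ a, f r ≤ 2 * (Fintype.card ρ : ℝ) := by
    calc ∑ r ∈ t \ a, f r ≤ ∑ _r ∈ t \ a, (2 : ℝ) :=
          Finset.sum_le_sum fun r hr => h2 r (Finset.mem_sdiff.1 hr).2
      _ = ((t \ a).card : ℝ) * 2 := by simp
      _ ≤ _ := by
          have : ((t \ a).card : ℝ) ≤ Fintype.card ρ := by exact_mod_cast Finset.card_le_univ _
          linarith
  have u2 : 2 * (Fintype.card ρ : ℝ) + 2 ≤ ∑ r ∈ a \ t, f r := by
    refine (h1 q hqa).trans ?_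
    refine Finset.single_le_sum (f := f) (fun r hr => ?_) (Finset.mem_sdiff.2 ⟨hqa, hqt⟩)
    have := h1 r (Finset.mem_sdiff.1 hr).1
    linarith
  have e1 := Finset.sum_inter_add_sum_sdiff t a f
  have e2 := Finset.sum_inter_add_sum_sdiff a t f
  rw [Finset.inter_comm] at e2
  linarith

/-- Payoffs separating greedy profiles from equilibria. The first user of `A` or `B` receives
`2 * E * (N + 1)`, where `N` is the number of resources and `E = 2 * N + 2`; the other payoffs make
`u` and `v` best responses to each other. -/
noncomputable def badPay [Fintype ρ] (A B : ρ) (u v : Finset ρ) (r : ρ) (k : ℕ) : ℝ :=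
  if k ≤ 1 then
    if r = A ∨ r = B then 2 * (2 * (Fintype.card ρ : ℝ) + 2) * (Fintype.card ρ + 1)
    else if r ∈ u ∧ r ∈ v then 2 * (2 * (Fintype.card ρ : ℝ) + 2)
    else if r ∈ u ∨ r ∈ v then 2 * (Fintype.card ρ : ℝ) + 2
    else 2
  else if r ∈ u ∧ r ∈ v then 2 * (Fintype.card ρ : ℝ) + 2 else 1

theorem badPay_swap [Fintype ρ] (A B : ρ) (u v : Finset ρ) :
    badPay A B u v = badPay B A v u := by
  funext r k
  simp only [badPay, or_comm, and_comm]

theorem badPay_pos [Fintype ρ] (A B : ρ) (u v : Finset ρ) (r : ρ) (k : ℕ) :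
    0 < badPay A B u v r k := by
  unfold badPay
  split_ifs <;> positivity

theorem badPay_mono [Fintype ρ] (A B : ρ) (u v : Finset ρ) (r : ρ) (hr : Fintype.card ρ ≠ 0) :
    badPay A B u v r 2 < badPay A B u v r 1 := by
  have hN : (1 : ℝ) ≤ Fintype.card ρ := by exact_mod_cast Nat.one_le_iff_ne_zero.2 hr
  unfold badPay
  split_ifs <;> first | omega | nlinarith

/-- `u` is a best response to a single opponent playing `v`. -/
theorem badPay_best [Fintype ρ] {SS : Finset (Finset ρ)} (hsf : SubsetFree SS) {A B : ρ}
    {u v : Finset ρ} (hu : u ∈ SS) (hA : A ∈ u) (hB : B ∈ v)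
    {t : Finset ρ} (ht : t ∈ SS) :
    ∑ r ∈ t, badPay A B u v r ((if r ∈ v then 1 else 0) + 1) ≤
      ∑ r ∈ u, badPay A B u v r ((if r ∈ v then 1 else 0) + 1) := by
  have hN : (0 : ℝ) ≤ Fintype.card ρ := Nat.cast_nonneg _
  refine sum_le_of_dominant hsf hu ht _ (fun r hr => ?_) (fun r hr => ?_)
  · by_cases hv : r ∈ v
    · simp [badPay, hr, hv]
    · simp only [badPay, hr, hv, if_false, zero_add, le_refl, if_true, and_false, or_false]
      split_ifs <;> nlinarith
  · by_cases hv : r ∈ v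
    · simp [badPay, hr, hv]
    · have h1 : r ≠ A := fun e => hr (e ▸ hA)
      have h2 : r ≠ B := fun e => hv (e ▸ hB)
      simp [badPay, hr, hv, h1, h2]

/-- With no predecessor, `s1` is strictly better than `u`: it collects two large payoffs. -/
theorem badPay_first [Fintype ρ] {A B : ρ} {u v s1 : Finset ρ}
    (hAB : A ≠ B) (hA : A ∈ s1) (hB : B ∈ s1) (hB' : B ∉ u) :
    ∑ r ∈ u, badPay A B u v r 1 < ∑ r ∈ s1, badPay A B u v r 1 := by
  have hN : (0 : ℝ) ≤ Fintype.card ρ := Nat.cast_nonneg _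
  set E : ℝ := 2 * (Fintype.card ρ : ℝ) + 2 with hE
  have hA1 : badPay A B u v A 1 = 2 * E * (Fintype.card ρ + 1) := by simp [badPay, hE]
  have hB1 : badPay A B u v B 1 = 2 * E * (Fintype.card ρ + 1) := by simp [badPay, hE]
  have low : 2 * (2 * E * (Fintype.card ρ + 1)) ≤ ∑ r ∈ s1, badPay A B u v r 1 := by
    calc 2 * (2 * E * (Fintype.card ρ + 1)) = ∑ r ∈ {A, B}, badPay A B u v r 1 := by
          rw [Finset.sum_pair hAB, hA1, hB1]; ring
      _ ≤ _ := Finset.sum_le_sum_of_subset_of_nonneg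
          (by intro r hr; simp only [Finset.mem_insert, Finset.mem_singleton] at hr
              rcases hr with rfl | rfl <;> assumption)
          (fun r _ _ => (badPay_pos A B u v r 1).le)
  have up : ∑ r ∈ u, badPay A B u v r 1 ≤
      2 * E * (Fintype.card ρ + 1) + Fintype.card ρ * (2 * E) := by
    calc ∑ r ∈ u, badPay A B u v r 1
        ≤ ∑ r ∈ u, ((if r = A then 2 * E * (Fintype.card ρ + 1) else 0) + 2 * E) := by
          refine Finset.sum_le_sum fun r hr => ?_
          have : r ≠ B := fun e => hB' (e ▸ hr)
          simp only [badPay, this, or_false, le_refl, if_true, ← hE]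
          split_ifs <;> nlinarith
      _ = (∑ r ∈ u, if r = A then 2 * E * (Fintype.card ρ + 1) else 0) + u.card * (2 * E) := by
          rw [Finset.sum_add_distrib, Finset.sum_const, nsmul_eq_mul]
      _ ≤ _ := by
          refine add_le_add ?_ ?_
          · rw [Finset.sum_ite_eq']
            split_ifs
            · exact le_rfl
            · positivity
          · have : (u.card : ℝ) ≤ Fintype.card ρ := by exact_mod_cast Finset.card_le_univ _
            exact mul_le_mul_of_nonneg_right this (by positivity)
  nlinarith

theorem exists_game_of_badConfig [Fintype ρ] {SS : Finset (Finset ρ)} (hsf : SubsetFree SS)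
    (h : BadConfig SS) : ∃ P : ρ → ℕ → ℝ, MonotonePay 2 P ∧ SingleSigned 2 P ∧
      ∃ s : Fin 2 → Finset ρ, IsNE SS P s ∧ ¬ IsGreedy SS P s := by
  obtain ⟨A, B, s1, h1, u, hu, v, hv, hA1, hB1, hAu, hAv, hBv, hBu⟩ := h
  have hAB : A ≠ B := fun e => hBu (e ▸ hAu)
  have hcard : Fintype.card ρ ≠ 0 := (Fintype.card_pos_iff.2 ⟨A⟩).ne'
  have hs : IsProfile SS ![u, v] := by
    intro i
    fin_cases i
    · exact hu
    · exact hv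
  have c0 : ∀ r, congOn ![u, v] (Finset.univ.erase (0 : Fin 2)) r = if r ∈ v then 1 else 0 := by
    intro r
    rw [show (Finset.univ.erase (0 : Fin 2)) = {1} by decide, congOn, Finset.filter_singleton]
    split_ifs <;> simp_all
  have c1 : ∀ r, congOn ![u, v] (Finset.univ.erase (1 : Fin 2)) r = if r ∈ u then 1 else 0 := by
    intro r
    rw [show (Finset.univ.erase (1 : Fin 2)) = {0} by decide, congOn, Finset.filter_singleton]
    split_ifs <;> simp_all
  refine ⟨badPay A B u v, ?_, Or.inl fun r k _ _ => badPay_pos A B u v r k, ![u, v], ?_, ?_⟩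
  · intro r k l hk hkl hl
    obtain rfl : k = 1 := by omega
    obtain rfl : l = 2 := by omega
    exact badPay_mono A B u v r hcard
  · rw [isNE_iff_neOn]
    refine ⟨hs, fun i _ t ht => ?_⟩
    fin_cases i
    · simp only [valOn, Fin.zero_eta, c0]
      exact badPay_best hsf hu hAu hBv ht
    · simp only [valOn, Fin.mk_one, c1]
      rw [badPay_swap]
      exact badPay_best hsf hv hBv hAu ht
  · rw [isGreedy_iff]
    rintro ⟨_, π, hπ, hg⟩
    have hne : π 0 ≠ π 1 := fun e => absurd (hπ e) (by decide)
    rcases lt_or_gt_of_ne hne with hlt | hlt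
    · have e : (Finset.univ.filter fun j => π j < π 0) = ∅ := by
        ext j
        fin_cases j <;> simp [hlt.le]
      have := hg 0 s1 h1
      rw [e] at this
      have hlt' := badPay_first (v := v) hAB hA1 hB1 hBu
      simp only [valOn, congOn, Finset.filter_empty, Finset.card_empty, zero_add] at this
      exact absurd this (not_le.2 hlt')
    · have e : (Finset.univ.filter fun j => π j < π 1) = ∅ := by
        ext j
        fin_cases j <;> simp [hlt.le]
      have := hg 1 s1 h1
      rw [e, badPay_swap] at this
      have hlt' := badPay_first (v := u) hAB.symm hB1 hA1 hAv
      simp only [valOn, congOn, Finset.filter_empty, Finset.card_empty, zero_add] at this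
      exact absurd this (not_le.2 hlt')

end Aux

/-- A subset-free congestion game form has no bad configuration iff every
single-signed monotone symmetric congestion game with this form satisfies
`Z(G) = NE(G)`. -/
theorem tree_representable_iff_greedy_eq_NE_single_signed
    {ρ : Type} [DecidableEq ρ] [Fintype ρ]
    (SS : Finset (Finset ρ)) (hform : ValidForm SS) (hsf : SubsetFree SS) :
    (¬ BadConfig SS) ↔
      (∀ n : ℕ, 1 ≤ n → ∀ P : ρ → ℕ → ℝ, MonotonePay n P → SingleSigned n P →
        ∀ s : Fin n → Finset ρ, (IsGreedy SS P s ↔ IsNE SS P s)) := by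
  constructor
  · intro h n _ P hP _ s
    exact isGreedy_iff_isNE_of_tree h (by simpa using hP) s
  · intro h hbad
    obtain ⟨P, hP, hS, s, hNE, hG⟩ := exists_game_of_badConfig hsf hbad
    exact hG ((h 2 (by norm_num) P hP hS s).2 hNE)
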